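/- Let n_1 ≥ n_2 ≥ ⋯ ≥ n_{k−2} ≥ 1 with k ≥ 3. Then the complete k-partite graph K_{n_1,…,n_{k−2},1,1} (with two parts of size 1 appended) is S-determined: every graph with the same Seidel spectrum is switching equivalent to a graph isomorphic to K_{n_1,…,n_{k−2},1,1}. -/

import Mathlib

open Polynomial Matrix Finset SimpleGraph

/- The Seidel matrix `S(G) = J - I - 2A(G)` of a simple graph `G`. -/
open scoped Classical in
noncomputable def seidelMatrix {V : Type*} [Fintype V] [DecidableEq V]
    (G : SimpleGraph V) : Matrix V V ℝ :=
  (Matrix.of fun _ _ => (1 : ℝ)) - 1 - 2 • G.adjMatrix ℝ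

/-- Two graphs on the same vertex set are switching equivalent iff their Seidel
matrices are conjugate by a diagonal `±1` matrix. -/
def SwitchingEquiv {V : Type*} [Fintype V] [DecidableEq V]
    (G H : SimpleGraph V) : Prop :=
  ∃ ε : V → ℝ, (∀ v, ε v = 1 ∨ ε v = -1) ∧
    seidelMatrix H = Matrix.diagonal ε * seidelMatrix G * Matrix.diagonal ε

/-- A graph `G` is determined, up to switching, by its Seidel spectrum
(`S`-determined) if every graph with the same Seidel spectrum is switching
equivalent to a graph isomorphic to `G`. -/
def SDetermined {V : Type} [Fintype V] [DecidableEq V] (G : SimpleGraph V) : Prop :=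
  ∀ (W : Type) [Fintype W] [DecidableEq W] (H : SimpleGraph W),
    (seidelMatrix H).charpoly = (seidelMatrix G).charpoly →
    ∃ H' : SimpleGraph W, SwitchingEquiv H H' ∧ Nonempty (H' ≃g G)

/-- Matrix determinant lemma for a rank-one perturbation of a diagonal matrix. -/
theorem det_diagonal_add_vecMulVec {R ι : Type*} [CommRing R] [IsDomain R] [Fintype ι]
    [DecidableEq ι] (d u v : ι → R) (hd : ∀ i, d i ≠ 0) :
    (diagonal d + vecMulVec u v).det =
      ∏ i, d i + ∑ i, u i * v i * ∏ j ∈ univ.erase i, d j := by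
  let f := algebraMap R (FractionRing R)
  have hf : Function.Injective f := IsFractionRing.injective R (FractionRing R)
  have hd' : ∀ i, f (d i) ≠ 0 := fun i => (map_ne_zero_iff f hf).2 (hd i)
  apply hf
  have key : f.mapMatrix (diagonal d + vecMulVec u v) = diagonal (fun i => f (d i)) *
      (1 + replicateCol Unit (fun i => f (u i) / f (d i)) *
        replicateRow Unit (fun i => f (v i))) := by
    ext i j
    by_cases h : i = j
    · subst h
      rw [diagonal_mul]
      simp [vecMulVec_apply, mul_apply, mul_add]
      field_simp [hd' i]
    · rw [diagonal_mul]
      simp [vecMulVec_apply, mul_apply, h]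
      field_simp [hd' i]
  rw [RingHom.map_det, key, det_mul, det_one_add_replicateCol_mul_replicateRow, det_diagonal,
    mul_add, mul_one, dotProduct, Finset.mul_sum]
  simp only [map_add, map_prod, map_sum, map_mul]
  congr 1
  refine Finset.sum_congr rfl fun i _ => ?_
  rw [← Finset.mul_prod_erase _ _ (Finset.mem_univ i)]
  field_simp [hd' i]

theorem seidelMatrix_add_one_apply {V : Type*} [Fintype V] [DecidableEq V] (G : SimpleGraph V)
    [DecidableRel G.Adj] (u v : V) :
    (seidelMatrix G + 1) u v = if G.Adj u v then -1 else 1 := by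
  rw [seidelMatrix, two_nsmul]
  by_cases h : G.Adj u v
  · simp [h, h.ne]
  · simp [h]

theorem seidelMatrix_charpoly_iso {V W : Type*} [Fintype V] [DecidableEq V] [Fintype W]
    [DecidableEq W] {G : SimpleGraph V} {H : SimpleGraph W} (e : G ≃g H) :
    (seidelMatrix G).charpoly = (seidelMatrix H).charpoly := by
  classical
  rw [← charpoly_reindex e.toEquiv]
  congr 1
  rw [← add_left_inj 1]
  ext u v
  rw [seidelMatrix_add_one_apply, ← e.symm.map_rel_iff, ← seidelMatrix_add_one_apply]
  simp [Matrix.one_apply]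
  rfl

theorem SwitchingEquiv.charpoly_eq {V : Type*} [Fintype V] [DecidableEq V]
    {G H : SimpleGraph V} (h : SwitchingEquiv G H) :
    (seidelMatrix H).charpoly = (seidelMatrix G).charpoly := by
  obtain ⟨ε, hε, hH⟩ := h
  have hsq : diagonal ε * diagonal ε = 1 := by
    rw [diagonal_mul_diagonal, ← diagonal_one]
    congr 1
    ext v
    rcases hε v with h | h <;> simp [h]
  rw [hH, charpoly_mul_comm, ← mul_assoc, hsq, one_mul]

theorem charpoly_add_one {V : Type*} [Fintype V] [DecidableEq V] (M : Matrix V V ℝ) :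
    (M + 1).charpoly = M.charpoly.comp (X - 1) := by
  have := charpoly_sub_scalar M (-1)
  simpa [sub_eq_add_neg] using this

section Multipartite

variable {ι : Type*} [Fintype ι] [DecidableEq ι]

/-- `∏ (X - 2 aᵢ)`, padded with zero roots to degree `N`. -/
noncomputable def paddedPoly (N : ℕ) (a : ι → ℕ) : ℝ[X] :=
  X ^ (N - Fintype.card ι) * ∏ i, (X - C (2 * (a i : ℝ)))

theorem two_mul_charpoly_completeMultipartiteGraph (V : ι → Type*) [∀ i, Fintype (V i)]
    [∀ i, DecidableEq (V i)] (hV : ∀ i, 1 ≤ Fintype.card (V i)) :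
    2 * (seidelMatrix (completeMultipartiteGraph V) + 1).charpoly =
      (2 - (Fintype.card (Σ i, V i) : ℝ[X])) *
          paddedPoly (Fintype.card (Σ i, V i)) (fun i => Fintype.card (V i)) +
        X * derivative (paddedPoly (Fintype.card (Σ i, V i)) (fun i => Fintype.card (V i))) := by
  classical
  have hcard : Fintype.card ι ≤ Fintype.card (Σ i, V i) := by
    rw [Fintype.card_sigma]
    simpa using Finset.card_nsmul_le_sum univ (fun i => Fintype.card (V i)) 1 (fun i _ => hV i)
  set N := Fintype.card (Σ i, V i)
  set a : ι → ℕ := fun i => Fintype.card (V i) with ha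
  let U : Matrix (Σ i, V i) ι ℝ := Matrix.of fun x i => if x.1 = i then 1 else 0
  let Q : Matrix ι ι ℝ := Matrix.of fun i j => if i = j then 1 else -1
  have hS : seidelMatrix (completeMultipartiteGraph V) + 1 = U * (Q * Uᵀ) := by
    ext x y
    rw [seidelMatrix_add_one_apply]
    have : ∀ i, (Q * Uᵀ) i y = if i = y.1 then 1 else -1 := fun i => by simp [U, Q, mul_apply]
    rw [Matrix.mul_apply]
    simp [this, U, -mul_ite, ite_mul]
  have hD : Q * Uᵀ * U = Matrix.of fun i j => (if i = j then 1 else -1) * (a j : ℝ) := by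
    rw [Matrix.mul_assoc]
    have : Uᵀ * U = diagonal fun i => (a i : ℝ) := by
      ext i j
      simp only [mul_apply, transpose_apply, U, Matrix.of_apply, Fintype.sum_sigma]
      by_cases h : i = j
      · subst h
        simp [ha]
      · simp only [diagonal_apply, h, if_false]
        refine Finset.sum_eq_zero fun k _ => Finset.sum_eq_zero fun x _ => ?_
        by_cases hk : k = i
        · simp [hk, h]
        · simp [hk]
    rw [this]
    ext i j
    simp [Q, mul_diagonal]
  have hchar : (Q * Uᵀ * U).charpoly = ∏ i, (X - C (2 * (a i : ℝ))) +
      ∑ i, C (a i : ℝ) * ∏ j ∈ univ.erase i, (X - C (2 * (a j : ℝ))) := by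
    have := det_diagonal_add_vecMulVec (fun i => X - C (2 * (a i : ℝ))) (fun _ : ι => (1 : ℝ[X]))
      (fun i => C (a i : ℝ)) (fun i => X_sub_C_ne_zero _)
    simp only [one_mul] at this
    rw [← this, hD, charpoly]
    congr 1
    ext1 i j
    by_cases h : i = j
    · subst h
      simp [vecMulVec_apply, two_mul]
      ring
    · simp [vecMulVec_apply, h]
  have hP : X * derivative (∏ i, (X - C (2 * (a i : ℝ)))) =
      (Fintype.card ι : ℝ[X]) * ∏ i, (X - C (2 * (a i : ℝ))) +
        2 * ∑ i, C (a i : ℝ) * ∏ j ∈ univ.erase i, (X - C (2 * (a j : ℝ))) := by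
    have : (Fintype.card ι : ℝ[X]) * ∏ i, (X - C (2 * (a i : ℝ))) =
        ∑ i, (X - C (2 * (a i : ℝ))) * ∏ j ∈ univ.erase i, (X - C (2 * (a j : ℝ))) := by
      rw [Finset.sum_congr rfl fun i hi => Finset.mul_prod_erase univ
        (fun j => X - C (2 * (a j : ℝ))) hi]
      simp
    rw [this, derivative_prod_finset, Finset.mul_sum, Finset.mul_sum, ← Finset.sum_add_distrib]
    refine Finset.sum_congr rfl fun i _ => ?_
    rw [derivative_X_sub_C, C_mul, C_ofNat]
    ring
  obtain ⟨r, hr⟩ := Nat.exists_eq_add_of_le' hcard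
  have hpow : X * derivative (X ^ r : ℝ[X]) = (r : ℝ[X]) * X ^ r := by
    cases r with
    | zero => simp
    | succ r => rw [derivative_X_pow]; simp; ring
  rw [hS, charpoly_mul_comm_of_le _ _ hcard, hchar]
  simp only [paddedPoly, derivative_mul]
  change 2 * (X ^ (N - _) * _) = _
  rw [hr, Nat.add_sub_cancel]
  push_cast
  linear_combination (-(∏ i, (X - C (2 * (a i : ℝ))))) * hpow - X ^ r * hP

end Multipartite

section Multisets

variable {ι κ : Type*} [Fintype ι] [Fintype κ]

theorem exists_equiv_of_map_univ_eq {α : Type*} (a : ι → α) (b : κ → α)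
    (h : Multiset.map a univ.val = Multiset.map b univ.val) : ∃ e : ι ≃ κ, ∀ i, b (e i) = a i := by
  classical
  have hfib : ∀ x, Nonempty ({i // a i = x} ≃ {j // b j = x}) := fun x => by
    rw [← Fintype.card_eq, Fintype.card_subtype, Fintype.card_subtype]
    have := congrArg (Multiset.count x) h
    rw [Multiset.count_map, Multiset.count_map] at this
    simpa [Finset.card, Finset.filter_val, eq_comm] using this
  exact ⟨Equiv.ofFiberEquiv fun x => (hfib x).some, fun i => Equiv.ofFiberEquiv_map _ i⟩

theorem filter_roots_paddedPoly {N : ℕ} {a : ι → ℕ} (ha : ∀ i, 1 ≤ a i) :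
    (paddedPoly N a).roots.filter (· ≠ 0) =
      (Multiset.map a univ.val).map (fun k : ℕ => 2 * (k : ℝ)) := by
  have hprod : ∏ i, (X - C (2 * (a i : ℝ))) ≠ 0 :=
    Finset.prod_ne_zero_iff.2 fun i _ => X_sub_C_ne_zero _
  rw [paddedPoly, roots_mul (mul_ne_zero (pow_ne_zero _ X_ne_zero) hprod), roots_X_pow,
    roots_prod _ _ hprod, Multiset.filter_add]
  simp only [roots_X_sub_C, Multiset.bind_singleton, Multiset.map_map, Function.comp_def]
  rw [Multiset.filter_eq_nil.2, zero_add, Multiset.filter_eq_self.2]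
  · intro x hx
    obtain ⟨i, -, rfl⟩ := Multiset.mem_map.1 hx
    have := ha i
    positivity
  · intro x hx
    rw [Multiset.mem_of_mem_nsmul hx |> Multiset.mem_singleton.1]
    simp

theorem map_univ_eq_of_paddedPoly_eq {N : ℕ} {a : ι → ℕ} {b : κ → ℕ} (ha : ∀ i, 1 ≤ a i)
    (hb : ∀ j, 1 ≤ b j) (h : paddedPoly N a = paddedPoly N b) :
    Multiset.map a univ.val = Multiset.map b univ.val := by
  refine Multiset.map_injective (f := fun k : ℕ => 2 * (k : ℝ)) (fun x y hxy => ?_) ?_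
  · simpa using hxy
  · rw [← filter_roots_paddedPoly ha, h, filter_roots_paddedPoly hb]

/-- Solutions of `X * D' = r D` are monomials of degree `r`. -/
theorem eq_monomial_of_X_mul_derivative {D : ℝ[X]} {r : ℕ}
    (h : X * derivative D = (r : ℝ[X]) * D) : D = C (D.coeff r) * X ^ r := by
  ext j
  rw [coeff_C_mul_X_pow]
  split_ifs with hj
  · rw [hj]
  · have := congrArg (fun p => p.coeff j) h
    simp only [coeff_natCast_mul] at this
    have h2 : (X * derivative D).coeff j = j * D.coeff j := by
      cases j with
      | zero => simp
      | succ j => rw [coeff_X_mul, coeff_derivative]; push_cast; ring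
    rw [h2] at this
    have hne : (j : ℝ) - r ≠ 0 := sub_ne_zero.2 (by exact_mod_cast hj)
    exact (mul_eq_zero.1 (by linear_combination this : ((j : ℝ) - r) * D.coeff j = 0)).resolve_left
      hne

theorem eval_derivative_paddedPoly_ne {N : ℕ} (hN : 3 ≤ N) (b : κ → ℕ) (hb : ∀ j, 2 ≤ b j)
    (hsum : ∑ j, b j = N) :
    2 * (derivative (paddedPoly N b)).eval 2 ≠ ((N : ℝ) - 2) * (paddedPoly N b).eval 2 := by
  intro h
  have hle : Fintype.card κ ≤ N := by
    rw [← hsum]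
    simpa using Finset.card_nsmul_le_sum univ b 1 (fun i _ => (by norm_num : 1 ≤ 2).trans (hb i))
  classical
  obtain ⟨r, hr⟩ := Nat.exists_eq_add_of_le' hle
  have hb' : ∀ j, (2 : ℝ) ≤ b j := fun j => by exact_mod_cast hb j
  have hne : ∀ j, (2 : ℝ) - 2 * b j ≠ 0 := fun j => by linarith [hb' j]
  set P := ∏ j, ((2 : ℝ) - 2 * b j)
  have hP : P ≠ 0 := Finset.prod_ne_zero_iff.2 fun j _ => hne j
  have hpow : 2 * (derivative (X ^ r : ℝ[X])).eval 2 = r * 2 ^ r := by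
    cases r with
    | zero => simp
    | succ r => simp; ring
  have hprod : (derivative (∏ i, (X - C (2 * (b i : ℝ))))).eval 2 =
      P * ∑ j, 1 / ((2 : ℝ) - 2 * b j) := by
    rw [derivative_prod_finset, eval_finsetSum, Finset.mul_sum]
    refine Finset.sum_congr rfl fun j _ => ?_
    rw [derivative_X_sub_C, mul_one, eval_prod]
    simp only [eval_sub, eval_X, eval_C]
    rw [mul_one_div, eq_div_iff (hne j), mul_comm]
    exact Finset.mul_prod_erase univ (fun j => (2 : ℝ) - 2 * b j) (Finset.mem_univ j)
  have heq : (r : ℝ) + 2 * ∑ j, 1 / ((2 : ℝ) - 2 * b j) = N - 2 := by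
    rw [paddedPoly, hr, Nat.add_sub_cancel, derivative_mul, eval_add, eval_mul, eval_mul, hprod,
      eval_mul, eval_prod] at h
    simp only [eval_sub, eval_X, eval_C, eval_pow] at h
    change 2 * (_ * P + _) = _ * (_ * P) at h
    have h2 : (2 : ℝ) ^ r * P ≠ 0 := by positivity
    rw [hr]
    refine mul_right_cancel₀ h2 ?_
    linear_combination h - P * hpow
  have hN' : (N : ℝ) = r + Fintype.card κ := by exact_mod_cast hr
  obtain hk | hk | hk : Fintype.card κ = 0 ∨ Fintype.card κ = 1 ∨ 2 ≤ Fintype.card κ := by omega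
  · have := Fintype.card_eq_zero_iff.1 hk
    simp at hsum
    omega
  · obtain ⟨j, hj⟩ := Fintype.card_eq_one_iff.1 hk
    have : Unique κ := ⟨⟨j⟩, hj⟩
    rw [Fintype.sum_unique] at hsum heq
    rw [hsum, hN', hk] at heq
    have h3 := hne default
    rw [hsum, hN', hk] at h3
    rw [Nat.cast_one] at heq h3
    have hr2 : (2 : ℝ) ≤ r := by
      have : 2 ≤ r := by omega
      exact_mod_cast this
    have h4 : 1 / ((2 : ℝ) - 2 * (r + 1)) = -1 / 2 := by linarith
    rw [div_eq_iff h3] at h4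
    linarith
  · have hneg : ∑ j, 1 / ((2 : ℝ) - 2 * b j) < 0 := by
      have : Nonempty κ := Fintype.card_pos_iff.1 (by omega)
      refine Finset.sum_neg (fun j _ => ?_) Finset.univ_nonempty
      exact one_div_neg.2 (by linarith [hb' j])
    have : (2 : ℝ) ≤ Fintype.card κ := by exact_mod_cast hk
    linarith

theorem paddedPoly_eq_of_two_ones {N : ℕ} (hN : 3 ≤ N) {a : ι → ℕ} {b : κ → ℕ}
    (hb : ∀ j, 1 ≤ b j) (hbN : ∑ j, b j = N)
    {i₁ i₂ : ι} (hi : i₁ ≠ i₂) (h₁ : a i₁ = 1) (h₂ : a i₂ = 1)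
    (h : (2 - (N : ℝ[X])) * paddedPoly N a + X * derivative (paddedPoly N a) =
      (2 - (N : ℝ[X])) * paddedPoly N b + X * derivative (paddedPoly N b)) :
    paddedPoly N a = paddedPoly N b := by
  classical
  obtain ⟨R, hR⟩ : ∃ R : ℝ[X], paddedPoly N a = (X - C 2) * ((X - C 2) * R) := by
    refine ⟨X ^ (N - Fintype.card ι) *
      ∏ i ∈ (univ.erase i₁).erase i₂, (X - C (2 * (a i : ℝ))), ?_⟩
    rw [paddedPoly, ← Finset.mul_prod_erase univ _ (Finset.mem_univ i₁),
      ← Finset.mul_prod_erase (univ.erase i₁) _ (Finset.mem_erase.2 ⟨hi.symm, Finset.mem_univ i₂⟩),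
      h₁, h₂]
    simp only [Nat.cast_one, mul_one]
    ring
  have ha0 : (paddedPoly N a).eval 2 = 0 := by simp [hR]
  have ha1 : (derivative (paddedPoly N a)).eval 2 = 0 := by simp [hR, derivative_mul]
  have hb0 : (paddedPoly N b).eval 2 = 0 := by
    by_contra hne
    have hb2 : ∀ j, 2 ≤ b j := by
      intro j
      by_contra hj
      have hj1 : b j = 1 := by have := hb j; omega
      apply hne
      rw [paddedPoly, eval_mul, eval_prod, Finset.prod_eq_zero (Finset.mem_univ j), mul_zero]
      simp [hj1]
    refine eval_derivative_paddedPoly_ne hN b hb2 hbN ?_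
    have := congrArg (eval 2) h
    simp only [eval_add, eval_mul, eval_sub, eval_X, ha0, ha1, eval_natCast, eval_ofNat] at this
    linarith
  obtain ⟨r, rfl⟩ : ∃ r, N = r + 2 := ⟨N - 2, by omega⟩
  have hD := eq_monomial_of_X_mul_derivative (r := r)
    (D := paddedPoly (r + 2) a - paddedPoly (r + 2) b) (by
      push_cast at h
      rw [derivative_sub]
      linear_combination h)
  have hc := congrArg (eval 2) hD
  simp only [eval_sub, ha0, hb0, eval_mul, eval_C, eval_pow, eval_X, sub_zero] at hc
  have hc0 := (mul_eq_zero.1 hc.symm).resolve_right (by positivity)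
  rw [hc0, C_0, zero_mul] at hD
  exact sub_eq_zero.1 hD

end Multisets

section Switching

variable {W : Type*} [Fintype W]

/-- The form `M` is nonnegative on a hyperplane, i.e. it has at most one negative eigenvalue. -/
def NonnegOnHyperplane (M : Matrix W W ℝ) : Prop :=
  ∃ w : W → ℝ, ∀ x : W → ℝ, w ⬝ᵥ x = 0 → 0 ≤ x ⬝ᵥ M *ᵥ x

theorem NonnegOnHyperplane.congr_mul {M : Matrix W W ℝ} (h : NonnegOnHyperplane M)
    (O : Matrix W W ℝ) : NonnegOnHyperplane (O * M * Oᵀ) := by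
  obtain ⟨w, hw⟩ := h
  refine ⟨O *ᵥ w, fun x hx => ?_⟩
  have := hw (Oᵀ *ᵥ x) (by rw [mulVec_transpose, dotProduct_comm, ← dotProduct_mulVec,
    dotProduct_comm, hx])
  rwa [← mulVec_mulVec, ← mulVec_mulVec, dotProduct_mulVec, ← mulVec_transpose]

variable [DecidableEq W]

theorem NonnegOnHyperplane.of_charpoly_eq {M N : Matrix W W ℝ} (hM : M.IsHermitian)
    (hN : N.IsHermitian) (hMN : N.charpoly = M.charpoly) (h : NonnegOnHyperplane M) :
    NonnegOnHyperplane N := by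
  have heig := (hN.eigenvalues_eq_eigenvalues_iff hM).2 hMN
  have hMs := hM.spectral_theorem
  have hNs := hN.spectral_theorem
  rw [heig] at hNs
  rw [Unitary.conjStarAlgAut_apply] at hMs hNs
  set D : Matrix W W ℝ := diagonal (RCLike.ofReal ∘ hM.eigenvalues)
  set P : Matrix W W ℝ := (hM.eigenvectorUnitary : Matrix W W ℝ)
  set Q : Matrix W W ℝ := (hN.eigenvectorUnitary : Matrix W W ℝ)
  have hP : star P * P = 1 := Unitary.coe_star_mul_self hM.eigenvectorUnitary
  have : N = (Q * star P) * M * (Q * star P)ᵀ := by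
    have hstar : ∀ A : Matrix W W ℝ, star A = Aᵀ := conjTranspose_eq_transpose_of_trivial
    rw [hMs, hNs]
    simp only [hstar] at hP ⊢
    rw [transpose_mul, transpose_transpose]
    simp only [Matrix.mul_assoc]
    rw [← Matrix.mul_assoc Pᵀ P, hP, Matrix.one_mul, ← Matrix.mul_assoc Pᵀ P, hP, Matrix.one_mul]
  rw [this]
  exact h.congr_mul _

theorem isHermitian_seidelMatrix_add_one (G : SimpleGraph W) :
    (seidelMatrix G + 1).IsHermitian := by
  classical
  ext u v
  simp only [conjTranspose_apply, seidelMatrix_add_one_apply, G.adj_comm]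
  simp

/-- A complete multipartite graph with parts given by the fibres of `f`. -/
theorem nonnegOnHyperplane_of_adj_iff {ι : Type*} [Fintype ι] [DecidableEq ι] {G : SimpleGraph W}
    (f : W → ι) (hG : ∀ u v, G.Adj u v ↔ f u ≠ f v) :
    NonnegOnHyperplane (seidelMatrix G + 1) := by
  classical
  refine ⟨1, fun x hx => ?_⟩
  rw [one_dotProduct] at hx
  have hsq : ∑ u, ∑ v, x u * x v = 0 := by rw [← Finset.sum_mul_sum, hx, zero_mul]
  have : x ⬝ᵥ (seidelMatrix G + 1) *ᵥ x =
      2 * ∑ i, (∑ u, if f u = i then x u else 0) ^ 2 - ∑ u, ∑ v, x u * x v := by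
    simp only [sq, Finset.sum_mul_sum]
    rw [Finset.sum_comm, Finset.mul_sum, ← Finset.sum_sub_distrib, dotProduct]
    refine Finset.sum_congr rfl fun u _ => ?_
    rw [Finset.sum_comm, Finset.mul_sum, ← Finset.sum_sub_distrib, mulVec, dotProduct,
      Finset.mul_sum]
    refine Finset.sum_congr rfl fun v _ => ?_
    rw [seidelMatrix_add_one_apply]
    by_cases h : f u = f v
    · simp [hG, h]; ring
    · have : ∑ i, (if f u = i then x u else 0) * (if f v = i then x v else 0) = 0 := by
        refine Finset.sum_eq_zero fun i _ => ?_
        split_ifs with h1 h2 <;> simp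
        exact absurd (h1.trans h2.symm) h
      rw [this]
      simp [hG, h]
  rw [this, hsq, sub_zero]
  positivity

theorem SwitchingEquiv.trans {G H K : SimpleGraph W} (h₁ : SwitchingEquiv G H)
    (h₂ : SwitchingEquiv H K) : SwitchingEquiv G K := by
  obtain ⟨ε, hε, h₁⟩ := h₁
  obtain ⟨δ, hδ, h₂⟩ := h₂
  refine ⟨fun v => ε v * δ v, fun v => ?_, ?_⟩
  · rcases hε v with h | h <;> rcases hδ v with h' | h' <;> simp [h, h']
  · rw [h₂, h₁]
    ext u v
    simp only [mul_diagonal, diagonal_mul]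
    ring

theorem SwitchingEquiv.nonnegOnHyperplane {G H : SimpleGraph W} (h : SwitchingEquiv G H)
    (hG : NonnegOnHyperplane (seidelMatrix G + 1)) :
    NonnegOnHyperplane (seidelMatrix H + 1) := by
  obtain ⟨ε, hε, h⟩ := h
  have hsq : diagonal ε * diagonal ε = 1 := by
    rw [diagonal_mul_diagonal, ← diagonal_one]
    congr 1
    ext v
    rcases hε v with h | h <;> simp [h]
  have := hG.congr_mul (diagonal ε)
  rwa [diagonal_transpose, Matrix.mul_add, Matrix.add_mul, ← h, Matrix.mul_one, hsq] at this

theorem exists_switchingEquiv (G : SimpleGraph W) (ε : W → ℝ) (hε : ∀ v, ε v = 1 ∨ ε v = -1) :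
    ∃ H, SwitchingEquiv G H ∧ ∀ u v, H.Adj u v ↔ u ≠ v ∧ (G.Adj u v ↔ ε u = ε v) := by
  classical
  refine ⟨⟨fun u v => u ≠ v ∧ (G.Adj u v ↔ ε u = ε v), ⟨fun u v => ?_⟩, ⟨fun u => by simp⟩⟩,
    ⟨ε, hε, ?_⟩, fun u v => Iff.rfl⟩
  · simp [eq_comm, G.adj_comm]
  · have hsq : diagonal ε * 1 * diagonal ε = 1 := by
      rw [Matrix.mul_one, diagonal_mul_diagonal, ← diagonal_one]
      congr 1
      ext v
      rcases hε v with h | h <;> simp [h]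
    rw [← add_left_inj 1]
    conv_rhs => rw [← hsq]
    rw [← Matrix.add_mul, ← Matrix.mul_add]
    ext u v
    rw [mul_diagonal, diagonal_mul, seidelMatrix_add_one_apply, seidelMatrix_add_one_apply]
    by_cases huv : u = v
    · subst huv
      rcases hε u with h | h <;> simp [h]
    · have h11 : (1 : ℝ) ≠ -1 := by norm_num
      by_cases hadj : G.Adj u v <;> rcases hε u with h | h <;> rcases hε v with h' | h' <;>
        simp [huv, hadj, h, h', h11, h11.symm]

theorem not_adj_of_nonnegOnHyperplane {K : SimpleGraph W}
    (hK : NonnegOnHyperplane (seidelMatrix K + 1)) {v a b c : W} (hv : ∀ u, ¬ K.Adj v u)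
    (hab : ¬ K.Adj a b) (hbc : ¬ K.Adj b c) (hac : K.Adj a c) (d : W) : ¬ K.Adj b d := by
  classical
  intro hbd
  obtain ⟨w, hw⟩ := hK
  set M := seidelMatrix K + 1
  have hM : ∀ x y, M x y = if K.Adj x y then -1 else 1 := seidelMatrix_add_one_apply K
  have hsymm : ∀ x y, M x y = M y x := fun x y => by rw [hM, hM, K.adj_comm]
  have hdiag : ∀ x, M x x = 1 := fun x => by simp [hM]
  have hMv : ∀ x, M v x = 1 := fun x => by simp [hM, hv]
  have hMac : M a c = -1 := by simp [hM, hac]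
  have hMbd : M b d = -1 := by simp [hM, hbd]
  have hMab : M a b = 1 := by simp [hM, hab]
  have hMbc : M b c = 1 := by simp [hM, hbc]
  let t : ℝ := (2 - M a d - M c d) / 2
  let p := w a + w c - t * w b - (2 - t) * w v
  let q := w b + w d - 2 * w v
  obtain ⟨α, β, hlin, hpos⟩ : ∃ α β : ℝ, α * p + β * q = 0 ∧ 0 < α ^ 2 + β ^ 2 := by
    by_cases h : p = 0
    · exact ⟨1, 0, by simp [h], by norm_num⟩
    · exact ⟨q, -p, by ring, by have := sq_pos_of_ne_zero h; nlinarith [sq_nonneg q]⟩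
  let e : W → W → ℝ := fun x => Pi.single x 1
  let y : W → ℝ := α • e a + α • e c + (β - t * α) • e b + β • e d +
    (-((2 - t) * α + 2 * β)) • e v
  have hbil : ∀ x z, e x ⬝ᵥ M *ᵥ e z = M x z := fun x z => by simp [e]
  have hwe : ∀ x, w ⬝ᵥ e x = w x := fun x => by simp [e]
  have hwy : w ⬝ᵥ y = 0 := by
    simp only [y, dotProduct_add, dotProduct_smul, hwe, smul_eq_mul]
    linear_combination hlin
  have hy := hw y hwy
  have hval : y ⬝ᵥ M *ᵥ y = -4 * (α ^ 2 + β ^ 2) := by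
    simp only [y, dotProduct_add, add_dotProduct, dotProduct_smul, smul_dotProduct, mulVec_add,
      mulVec_smul, hbil, smul_eq_mul, hdiag, hMv, hsymm _ v, hsymm c a, hsymm b a, hsymm d a,
      hsymm c b, hsymm d b, hsymm d c, hMac, hMab, hMbc, hMbd]
    have ht : M a d = 2 - 2 * t - M c d := by simp only [t]; ring
    rw [ht]
    ring
  linarith

theorem exists_switchingEquiv_isCompleteMultipartite {H : SimpleGraph W}
    (hH : NonnegOnHyperplane (seidelMatrix H + 1)) :
    ∃ K, SwitchingEquiv H K ∧ K.IsCompleteMultipartite := by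
  classical
  rcases isEmpty_or_nonempty W with hW | ⟨⟨v⟩⟩
  · exact ⟨H, ⟨1, fun v => (hW.false v).elim, by ext u; exact (hW.false u).elim⟩,
      ⟨fun a => (hW.false a).elim⟩⟩
  have h11 : (1 : ℝ) ≠ -1 := by norm_num
  obtain ⟨K, hHK, hK⟩ := exists_switchingEquiv H (fun u => if H.Adj v u then -1 else 1)
    (fun u => by by_cases h : H.Adj v u <;> simp [h])
  have hv : ∀ u, ¬ K.Adj v u := fun u => by
    by_cases h : H.Adj v u <;> simp [hK, h, h11]
  have hKn := hHK.nonnegOnHyperplane hH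
  let I : W → Prop := fun u => ∀ z, ¬ K.Adj u z
  obtain ⟨L, hKL, hL⟩ := exists_switchingEquiv K (fun u => if I u then -1 else 1)
    (fun u => by by_cases h : I u <;> simp [h])
  have hL' : ∀ x y, ¬ L.Adj x y ↔ (I x ↔ I y) ∧ ¬ K.Adj x y := by
    intro x y
    have hx : K.Adj x y → ¬ I x := fun h hI => hI y h
    have hy : K.Adj x y → ¬ I y := fun h hI => hI x h.symm
    rw [hL]
    by_cases hxy : x = y
    · subst hxy; simp
    · by_cases h1 : I x <;> by_cases h2 : I y <;> simp_all [h11.symm]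
  refine ⟨L, hHK.trans hKL, ⟨fun a b c hab hbc => ?_⟩⟩
  rw [hL'] at hab hbc ⊢
  refine ⟨hab.1.trans hbc.1, fun hac => ?_⟩
  have hb : I b := fun d => not_adj_of_nonnegOnHyperplane hKn hv hab.2 hbc.2 hac d
  exact hab.1.2 hb c hac

end Switching

/-- Complete multipartite graphs with matching part sizes are isomorphic. -/
theorem nonempty_iso_completeMultipartiteGraph {ι κ : Type*} {V : ι → Type*} {V' : κ → Type*}
    (e : ι ≃ κ) (f : ∀ i, Nonempty (V i ≃ V' (e i))) :
    Nonempty (completeMultipartiteGraph V ≃g completeMultipartiteGraph V') :=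
  ⟨⟨Equiv.sigmaCongr e fun i => (f i).some, by simp [Equiv.sigmaCongr]⟩⟩

/-- A complete multipartite graph on at least three vertices with two parts of size one is
determined, up to switching, by its Seidel spectrum. -/
theorem sDetermined_completeMultipartiteGraph {ι : Type} [Fintype ι] [DecidableEq ι]
    (V : ι → Type) [∀ i, Fintype (V i)] [∀ i, DecidableEq (V i)]
    (hV : ∀ i, 1 ≤ Fintype.card (V i)) (hN : 3 ≤ Fintype.card (Σ i, V i)) {i₁ i₂ : ι}
    (hi : i₁ ≠ i₂) (h₁ : Fintype.card (V i₁) = 1) (h₂ : Fintype.card (V i₂) = 1) :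
    SDetermined (completeMultipartiteGraph V) := by
  classical
  intro W _ _ H hH
  have hcard : Fintype.card W = Fintype.card (Σ i, V i) := by
    rw [← charpoly_natDegree_eq_dim (seidelMatrix H), hH, charpoly_natDegree_eq_dim]
  let e : W ≃ Σ i, V i := Fintype.equivOfCardEq hcard
  let G : SimpleGraph W := (completeMultipartiteGraph V).comap e
  have hG : (seidelMatrix G).charpoly = (seidelMatrix (completeMultipartiteGraph V)).charpoly :=
    seidelMatrix_charpoly_iso (SimpleGraph.Iso.comap e _)
  obtain ⟨K, hHK, hK⟩ := exists_switchingEquiv_isCompleteMultipartite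
    (NonnegOnHyperplane.of_charpoly_eq (isHermitian_seidelMatrix_add_one G)
      (isHermitian_seidelMatrix_add_one H)
      (by rw [charpoly_add_one, charpoly_add_one, hH, hG])
      (nonnegOnHyperplane_of_adj_iff (fun u => (e u).1) fun u v => by simp [G]))
  refine ⟨K, hHK, ?_⟩
  let κ := Quotient hK.setoid
  let V' : κ → Type := fun c => {x // hK.setoid.r c.out x}
  have hV' : ∀ c, 1 ≤ Fintype.card (V' c) := fun c =>
    Fintype.card_pos_iff.2 ⟨⟨c.out, hK.setoid.refl _⟩⟩
  let iso : K ≃g completeMultipartiteGraph V' := hK.iso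
  have hcard' : Fintype.card (Σ c, V' c) = Fintype.card (Σ i, V i) := by
    rw [← hcard, Fintype.card_congr iso.toEquiv]
  have hchar : (seidelMatrix (completeMultipartiteGraph V)).charpoly =
      (seidelMatrix (completeMultipartiteGraph V')).charpoly := by
    rw [← seidelMatrix_charpoly_iso iso, hHK.charpoly_eq, hH]
  have hpoly := two_mul_charpoly_completeMultipartiteGraph V hV
  rw [charpoly_add_one, hchar, ← charpoly_add_one,
    two_mul_charpoly_completeMultipartiteGraph V' hV', hcard'] at hpoly
  have hpad := paddedPoly_eq_of_two_ones hN hV' (by rw [← Fintype.card_sigma, hcard']) hi h₁ h₂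
    hpoly.symm
  obtain ⟨σ, hσ⟩ := exists_equiv_of_map_univ_eq _ _ (map_univ_eq_of_paddedPoly_eq hV hV' hpad)
  obtain ⟨iso'⟩ := nonempty_iso_completeMultipartiteGraph (V := V) (V' := V') σ
    fun i => ⟨Fintype.equivOfCardEq (hσ i).symm⟩
  exact ⟨iso.trans iso'.symm⟩

/-- **Example.** For `n_1 ≥ ⋯ ≥ n_{k-2} ≥ 1` (here `k - 2 = m ≥ 1`, i.e. `k ≥ 3`),
the complete `k`-partite graph `K_{n_1,…,n_{k-2},1,1}`, whose parts are the `n i`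
together with two further parts of size `1`, is determined, up to switching, by
its Seidel spectrum. -/
theorem sDetermined_append_one_one (m : ℕ) (hm : 1 ≤ m) (n : Fin m → ℕ)
    (hna : Antitone n) (hn : ∀ i, 1 ≤ n i) :
    SDetermined (completeMultipartiteGraph fun i : Fin (m + 2) =>
      Fin (if h : (i : ℕ) < m then n ⟨i, h⟩ else 1)) := by
  have hsize : ∀ i : Fin (m + 2), 1 ≤ if h : (i : ℕ) < m then n ⟨i, h⟩ else 1 := fun i => by
    split_ifs
    exacts [hn _, le_rfl]
  refine sDetermined_completeMultipartiteGraph _ (fun i => by simpa using hsize i) ?_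
    (i₁ := ⟨m, by omega⟩) (i₂ := ⟨m + 1, by omega⟩) (by simp) (by simp) (by simp)
  rw [Fintype.card_sigma]
  simp only [Fintype.card_fin]
  have := Finset.card_nsmul_le_sum univ _ 1 (fun i _ => hsize i)
  rw [Finset.card_univ, Fintype.card_fin, smul_eq_mul, mul_one] at this
  omega
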